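/- Define the real polynomials P(Z,T) = 1 + 12T + 24T² + 16T³ + 36TZ + 48T²Z − 6Z² + 36TZ² + 24T²Z² + 8Z³ + 60TZ³ − 3Z⁴ and Q(Z,T) = 24T² + 16T³ + 60TZ + 48T²Z − 3Z² + 36TZ² + 24T²Z² + 8Z³ + 36TZ³ − 6Z⁴ + 12TZ⁴ + Z⁶. Then the semi-algebraic set S = {(Z,T) ∈ ℝ² : 0 ≤ Z ≤ 1, 0 ≤ T ≤ 1, P(Z,T)·Q(Z,T) = 0} is homeomorphic to the closed unit interval [0,1]. -/

import Mathlib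

/-- The first cubic factor in equation (11) of the paper. -/
def stabP (Z T : ℝ) : ℝ :=
  1 + 12 * T + 24 * T ^ 2 + 16 * T ^ 3 + 36 * T * Z + 48 * T ^ 2 * Z - 6 * Z ^ 2 +
    36 * T * Z ^ 2 + 24 * T ^ 2 * Z ^ 2 + 8 * Z ^ 3 + 60 * T * Z ^ 3 - 3 * Z ^ 4

/-- The second cubic factor in equation (11) of the paper. -/
def stabQ (Z T : ℝ) : ℝ :=
  24 * T ^ 2 + 16 * T ^ 3 + 60 * T * Z + 48 * T ^ 2 * Z - 3 * Z ^ 2 + 36 * T * Z ^ 2 +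
    24 * T ^ 2 * Z ^ 2 + 8 * Z ^ 3 + 36 * T * Z ^ 3 - 6 * Z ^ 4 + 12 * T * Z ^ 4 + Z ^ 6

/-!
In the unit square `P` vanishes only at `(1, 0)`, where `Q` vanishes as well, so only the equation
`Q = 0` matters. For fixed `Z ∈ [0, 1]` the polynomial `Q(Z, ·)` is strictly increasing on `[0, 1]`
and changes sign there, so it has exactly one zero. Hence projecting the compact curve to the
`Z`-axis is a continuous bijection onto `[0, 1]`, and therefore a homeomorphism.
-/

open Function Set

section Topology

variable {X Y : Type*} [TopologicalSpace X] [TopologicalSpace Y]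

theorem nonempty_homeomorph_of_isCompact_of_bijOn [T2Space Y] {f : X → Y} {s : Set X} {t : Set Y}
    (hs : IsCompact s) (hf : ContinuousOn f s) (hbij : BijOn f s t) : Nonempty (s ≃ₜ t) := by
  have : CompactSpace s := isCompact_iff_compactSpace.1 hs
  exact ⟨(hf.mapsToRestrict hbij.mapsTo).homeoOfEquivCompactToT2 (f := hbij.equiv)⟩

theorem isCompact_sep_eq_of_continuousOn [T2Space X] [T1Space Y] {f : X → Y} {s : Set X}
    (hs : IsCompact s) (hf : ContinuousOn f s) (y : Y) : IsCompact {x ∈ s | f x = y} :=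
  hs.of_isClosed_subset (hf.preimage_isClosed_of_isClosed hs.isClosed isClosed_singleton)
    (sep_subset s _)

end Topology

section FiberwiseMonotone

variable {X α β : Type*} [ConditionallyCompleteLinearOrder α] [DenselyOrdered α]
  [TopologicalSpace α] [OrderTopology α] [LinearOrder β] [TopologicalSpace β]
  [OrderClosedTopology β] {F : X → α → β} {s : Set X} {a b : α} {c : β}

theorem bijOn_fst_levelSet_of_strictMonoOn (hab : a ≤ b)
    (hcont : ∀ x ∈ s, ContinuousOn (F x) (Icc a b))
    (hmono : ∀ x ∈ s, StrictMonoOn (F x) (Icc a b))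
    (ha : ∀ x ∈ s, F x a ≤ c) (hb : ∀ x ∈ s, c ≤ F x b) :
    BijOn Prod.fst {p ∈ s ×ˢ Icc a b | uncurry F p = c} s := by
  refine ⟨fun p hp ↦ hp.1.1, ?_, fun x hx ↦ ?_⟩
  · rintro ⟨x, y⟩ ⟨⟨hx, hy⟩, hxy⟩ ⟨_, y'⟩ ⟨⟨-, hy'⟩, hxy'⟩ rfl
    exact congrArg (Prod.mk x) ((hmono x hx).injOn hy hy' (hxy.trans hxy'.symm))
  · obtain ⟨y, hy, hxy⟩ := intermediate_value_Icc hab (hcont x hx) ⟨ha x hx, hb x hx⟩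
    exact ⟨(x, y), ⟨⟨hx, hy⟩, hxy⟩, rfl⟩

theorem nonempty_levelSet_homeomorph_of_strictMonoOn [TopologicalSpace X] [T2Space X]
    (hs : IsCompact s) (hab : a ≤ b) (hcont : ContinuousOn (uncurry F) (s ×ˢ Icc a b))
    (hmono : ∀ x ∈ s, StrictMonoOn (F x) (Icc a b))
    (ha : ∀ x ∈ s, F x a ≤ c) (hb : ∀ x ∈ s, c ≤ F x b) :
    Nonempty ({p ∈ s ×ˢ Icc a b | uncurry F p = c} ≃ₜ s) :=
  nonempty_homeomorph_of_isCompact_of_bijOn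
    (isCompact_sep_eq_of_continuousOn (hs.prod isCompact_Icc) hcont c) continuousOn_fst
    (bijOn_fst_levelSet_of_strictMonoOn hab (fun x hx ↦ hcont.uncurry_left x hx) hmono ha hb)

end FiberwiseMonotone

section Polynomials

variable {Z T : ℝ}

theorem stabP_eq_zero_iff (hZ₀ : 0 ≤ Z) (hZ₁ : Z ≤ 1) (hT : 0 ≤ T) :
    stabP Z T = 0 ↔ Z = 1 ∧ T = 0 := by
  constructor
  · intro h
    have expansion : stabP Z T = (1 - Z) ^ 3 * (1 + 3 * Z) +
        T * (12 + 36 * Z + 36 * Z ^ 2 + 60 * Z ^ 3 + 24 * T * (1 + Z) ^ 2 + 16 * T ^ 2) := by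
      unfold stabP; ring
    have hconst : 0 ≤ (1 - Z) ^ 3 * (1 + 3 * Z) :=
      mul_nonneg (pow_nonneg (sub_nonneg.2 hZ₁) 3) (by positivity)
    obtain ⟨hconst_eq_zero, hT_eq_zero⟩ :=
      (add_eq_zero_iff_of_nonneg hconst (by positivity)).1 (expansion.symm.trans h)
    have hZ : (1 - Z) ^ 3 = 0 := (mul_eq_zero_iff_right (by positivity)).1 hconst_eq_zero
    exact ⟨(sub_eq_zero.1 (pow_eq_zero_iff three_ne_zero |>.1 hZ)).symm,
      (mul_eq_zero_iff_right (by positivity)).1 hT_eq_zero⟩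
  · rintro ⟨rfl, rfl⟩
    norm_num [stabP]

theorem stabP_mul_stabQ_eq_zero_iff (hZ₀ : 0 ≤ Z) (hZ₁ : Z ≤ 1) (hT : 0 ≤ T) :
    stabP Z T * stabQ Z T = 0 ↔ stabQ Z T = 0 := by
  refine mul_eq_zero.trans (or_iff_right_of_imp fun hP ↦ ?_)
  obtain ⟨rfl, rfl⟩ := (stabP_eq_zero_iff hZ₀ hZ₁ hT).1 hP
  norm_num [stabQ]

theorem strictMonoOn_stabQ (hZ : 0 ≤ Z) : StrictMonoOn (stabQ Z) (Ici 0) := by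
  have expansion (T : ℝ) : stabQ Z T = stabQ Z 0 +
      ((60 * Z + 36 * Z ^ 2 + 36 * Z ^ 3 + 12 * Z ^ 4) * T + 24 * (1 + Z) ^ 2 * T ^ 2 +
        16 * T ^ 3) := by
    unfold stabQ; ring
  intro T₁ (hT₁ : 0 ≤ T₁) T₂ _ hlt
  rw [expansion T₁, expansion T₂]
  exact add_lt_add_right (add_lt_add_of_le_of_lt (by gcongr) (by gcongr)) _

theorem stabQ_zero_right_nonpos (hZ₀ : 0 ≤ Z) (hZ₁ : Z ≤ 1) : stabQ Z 0 ≤ 0 := by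
  have factorization : stabQ Z 0 = -(Z ^ 2 * (Z + 3) * (1 - Z) ^ 3) := by
    unfold stabQ; ring
  rw [factorization, neg_nonpos]
  exact mul_nonneg (by positivity) (pow_nonneg (sub_nonneg.2 hZ₁) 3)

theorem stabQ_one_right_nonneg (hZ : 0 ≤ Z) : 0 ≤ stabQ Z 1 := by
  have expansion : stabQ Z 1 =
      40 + 108 * Z + 57 * Z ^ 2 + 44 * Z ^ 3 + 6 * Z ^ 4 + Z ^ 6 := by
    unfold stabQ; ring
  rw [expansion]
  positivity

theorem continuous_uncurry_stabQ : Continuous (uncurry stabQ) := by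
  unfold uncurry stabQ
  fun_prop

end Polynomials

/-- The semi-algebraic set cut out in the unit square by `P·Q = 0` (the points of the
fundamental domain with stabilizer corresponding to `Φ = 1`) is homeomorphic to the
closed unit interval `[0,1]`. -/
theorem stabilizer_curve_homeomorphic_to_interval :
    Nonempty (({p : ℝ × ℝ | 0 ≤ p.1 ∧ p.1 ≤ 1 ∧ 0 ≤ p.2 ∧ p.2 ≤ 1 ∧
        stabP p.1 p.2 * stabQ p.1 p.2 = 0} : Set (ℝ × ℝ)) ≃ₜ (Set.Icc (0 : ℝ) 1)) := by
  have hset : {p : ℝ × ℝ | 0 ≤ p.1 ∧ p.1 ≤ 1 ∧ 0 ≤ p.2 ∧ p.2 ≤ 1 ∧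
      stabP p.1 p.2 * stabQ p.1 p.2 = 0} =
      {p ∈ Icc (0 : ℝ) 1 ×ˢ Icc (0 : ℝ) 1 | uncurry stabQ p = 0} := by
    ext ⟨Z, T⟩
    constructor
    · rintro ⟨hZ₀, hZ₁, hT₀, hT₁, hPQ⟩
      exact ⟨⟨⟨hZ₀, hZ₁⟩, hT₀, hT₁⟩, (stabP_mul_stabQ_eq_zero_iff hZ₀ hZ₁ hT₀).1 hPQ⟩
    · rintro ⟨⟨⟨hZ₀, hZ₁⟩, hT₀, hT₁⟩, hQ⟩
      exact ⟨hZ₀, hZ₁, hT₀, hT₁, (stabP_mul_stabQ_eq_zero_iff hZ₀ hZ₁ hT₀).2 hQ⟩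
  rw [hset]
  exact nonempty_levelSet_homeomorph_of_strictMonoOn isCompact_Icc zero_le_one
    continuous_uncurry_stabQ.continuousOn
    (fun _ hZ ↦ (strictMonoOn_stabQ hZ.1).mono Icc_subset_Ici_self)
    (fun _ hZ ↦ stabQ_zero_right_nonpos hZ.1 hZ.2) (fun _ hZ ↦ stabQ_one_right_nonneg hZ.1)
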